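/- Let F be a finite field of odd order q, z a non-square with 1-z non-square, Δ = diag(1,-z). The orthogonal group O(2ν+2, Δ) = {T ∈ GL_{2ν+2}(F) : T·S·Tᵗ = S} with S = [[0,I_ν,0],[I_ν,0,0],[0,0,Δ]] has order q^{ν(ν+1)} · ∏_{i=1}^{ν}(q^i - 1) · ∏_{i=0}^{ν+1}(q^i + 1). -/

import Mathlib

open Matrix

-- Gram matrix [[0, I_ν, 0], [I_ν, 0, 0], [0, 0, diag(1,-z)]] on F^ν ⊕ F^ν ⊕ F².
def gramS (F : Type*) [Field F] (ν : ℕ) (z : F) :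
    Matrix (Fin ν ⊕ (Fin ν ⊕ Fin 2)) (Fin ν ⊕ (Fin ν ⊕ Fin 2)) F := fun i j =>
  match i, j with
  | .inl a, .inr (.inl b) => if a = b then 1 else 0
  | .inr (.inl a), .inl b => if a = b then 1 else 0
  | .inr (.inr a), .inr (.inr b) => !![(1 : F), 0; 0, -z] a b
  | _, _ => 0

/-- The isometry group of a bilinear form. -/
def isoGrp {F V : Type*} [Field F] [AddCommGroup V] [Module F V]
    (B : V →ₗ[F] V →ₗ[F] F) : Subgroup (V ≃ₗ[F] V) where
  carrier := {g | ∀ x y, B (g x) (g y) = B x y}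
  mul_mem' := by
    intro a b ha hb x y
    simp only [LinearEquiv.mul_apply]
    rw [ha, hb]
  one_mem' := by intro x y; rfl
  inv_mem' := by
    intro a ha x y
    have := ha (a⁻¹ x) (a⁻¹ y)
    rw [← this]
    simp [← LinearEquiv.mul_apply]

theorem mem_isoGrp {F V : Type*} [Field F] [AddCommGroup V] [Module F V]
    {B : V →ₗ[F] V →ₗ[F] F} {g : V ≃ₗ[F] V} :
    g ∈ isoGrp B ↔ ∀ x y, B (g x) (g y) = B x y := Iff.rfl

/-- Adding a hyperbolic plane. -/
def hypForm {F W : Type*} [Field F] [AddCommGroup W] [Module F W]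
    (B : W →ₗ[F] W →ₗ[F] F) : (F × F × W) →ₗ[F] (F × F × W) →ₗ[F] F :=
  LinearMap.mk₂ F (fun u v => u.1 * v.2.1 + u.2.1 * v.1 + B u.2.2 v.2.2)
    (by intro a b c; simp; ring) (by intro a b c; simp; ring)
    (by intro a b c; simp; ring) (by intro a b c; simp; ring)

@[simp] theorem hypForm_apply {F W : Type*} [Field F] [AddCommGroup W] [Module F W]
    (B : W →ₗ[F] W →ₗ[F] F) (u v : F × F × W) :
    hypForm B u v = u.1 * v.2.1 + u.2.1 * v.1 + B u.2.2 v.2.2 := rfl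

theorem exists_refl {F V : Type*} [Field F] [AddCommGroup V] [Module F V]
    (h2 : (2 : F) ≠ 0) (B : V →ₗ[F] V →ₗ[F] F) (hs : ∀ x y, B x y = B y x)
    (u v : V) (hu : B u u = 0) (hv : B v v = 0) (huv : B u v ≠ 0) :
    ∃ g ∈ isoGrp B, g u = v := by
  let c : F := (B u v)⁻¹
  have hc : c * B u v = 1 := inv_mul_cancel₀ huv
  have hvu : B v u = B u v := hs v u
  let r : V →ₗ[F] V := LinearMap.id + (c • (B (u - v))).smulRight (u - v)
  have hr : ∀ x, r x = x + (c * (B u x - B v x)) • (u - v) := by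
    intro x; simp [r]
  have hinv : Function.Involutive r := by
    intro x
    rw [hr (r x), hr x]
    simp only [map_add, map_smul, map_sub, hu, hv, hvu, smul_eq_mul]
    rw [add_assoc, ← add_smul]
    have : c * (B u x - B v x) + c * (B u x + c * (B u x - B v x) * (0 - B u v) -
      (B v x + c * (B u x - B v x) * (B u v - 0))) = 0 := by
      linear_combination (-2 * c * (B u x - B v x)) * hc
    rw [this]; simp
  refine ⟨LinearEquiv.ofInvolutive r hinv, ?_, ?_⟩
  · intro x y
    simp only [LinearEquiv.coe_ofInvolutive]
    rw [hr, hr]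
    simp only [map_add, map_smul, map_sub, LinearMap.add_apply, LinearMap.smul_apply,
      LinearMap.sub_apply, hu, hv, hvu, smul_eq_mul, hs x u, hs x v]
    linear_combination (-2 * c * (B u x - B v x) * (B u y - B v y)) * hc
  · simp only [LinearEquiv.coe_ofInvolutive]
    rw [hr, hu, hvu]
    have : c * (0 - B u v) = -1 := by linear_combination -hc
    rw [this]; simp

section hyp
variable {F W : Type*} [Field F] [AddCommGroup W] [Module F W]

theorem hyp_symm (B : W →ₗ[F] W →ₗ[F] F) (hs : ∀ x y, B x y = B y x) :
    ∀ x y, hypForm B x y = hypForm B y x := by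
  intro x y; simp only [hypForm_apply, hs x.2.2]; ring

theorem hyp_nondeg (B : W →ₗ[F] W →ₗ[F] F) (hn : ∀ x, x ≠ 0 → ∃ y, B x y ≠ 0) :
    ∀ x, x ≠ 0 → ∃ y, hypForm B x y ≠ 0 := by
  rintro ⟨a, b, x⟩ hx
  by_cases ha : a = 0
  · by_cases hb : b = 0
    · have : x ≠ 0 := by
        rintro rfl; apply hx; simp [ha, hb]
      obtain ⟨y, hy⟩ := hn x this
      exact ⟨(0, 0, y), by simpa using hy⟩
    · exact ⟨(1, 0, 0), by simpa using hb⟩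
  · exact ⟨(0, 1, 0), by simpa using ha⟩

theorem hyp_trans (h2 : (2 : F) ≠ 0) (B : W →ₗ[F] W →ₗ[F] F) (hs : ∀ x y, B x y = B y x)
    (hn : ∀ x, x ≠ 0 → ∃ y, B x y ≠ 0) (u : F × F × W) (hu0 : u ≠ 0)
    (hu : hypForm B u u = 0) :
    ∃ g ∈ isoGrp (hypForm B), g (1, 0, 0) = u := by
  obtain ⟨a, b, x⟩ := u
  have hss := hyp_symm B hs
  have key : ∀ (w : F × F × W), w.2.1 ≠ 0 → hypForm B w w = 0 →
      ∃ g ∈ isoGrp (hypForm B), g (1, 0, 0) = w := by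
    intro w hw hww
    apply exists_refl h2 _ hss _ _ _ hww
    · simpa using hw
    · simp
  by_cases hb : b = 0
  · subst hb
    have : ∃ y, a + B x y ≠ 0 := by
      by_cases ha : a = 0
      · have : x ≠ 0 := by
          rintro rfl; apply hu0; simp [ha]
        obtain ⟨y, hy⟩ := hn x this
        exact ⟨y, by simpa [ha] using hy⟩
      · exact ⟨0, by simpa using ha⟩
    obtain ⟨y, hy⟩ := this
    have hw : hypForm B (-(B y y) / 2, 1, y) (-(B y y) / 2, 1, y) = 0 := by
      simp only [hypForm_apply]; field_simp; ring
    obtain ⟨g, hg, hg1⟩ := key (-(B y y) / 2, 1, y) (by simp) hw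
    obtain ⟨k, hk, hk1⟩ := exists_refl h2 _ hss _ (a, 0, x) hw hu (by
      rw [hss]; simpa using hy)
    exact ⟨k * g, mul_mem hk hg, by rw [LinearEquiv.mul_apply, hg1, hk1]⟩
  · exact key _ hb hu

/-- Eichler map. -/
def eichLin (B : W →ₗ[F] W →ₗ[F] F) (w : W) : (F × F × W) →ₗ[F] (F × F × W) where
  toFun u := (u.1 - B w u.2.2 - u.2.1 * (B w w / 2), u.2.1, u.2.2 + u.2.1 • w)
  map_add' := by
    rintro ⟨a, b, x⟩ ⟨a', b', x'⟩
    simp only [Prod.mk_add_mk, map_add, Prod.mk.injEq, add_smul, true_and]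
    exact ⟨by ring, by abel⟩
  map_smul' := by
    rintro c ⟨a, b, x⟩
    simp only [Prod.smul_mk, map_smul, smul_eq_mul, RingHom.id_apply, Prod.mk.injEq, true_and,
      smul_add, smul_smul, and_true]
    ring

theorem eichLin_apply (B : W →ₗ[F] W →ₗ[F] F) (w : W) (u : F × F × W) :
  eichLin B w u = (u.1 - B w u.2.2 - u.2.1 * (B w w / 2), u.2.1, u.2.2 + u.2.1 • w) := rfl

theorem eich_neg (h2 : (2 : F) ≠ 0) (B : W →ₗ[F] W →ₗ[F] F) (w : W) (u : F × F × W) :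
    eichLin B w (eichLin B (-w) u) = u := by
  obtain ⟨a, b, x⟩ := u
  simp only [eichLin_apply, map_neg, LinearMap.neg_apply, map_add, map_smul, smul_eq_mul,
    Prod.mk.injEq, true_and, smul_neg, neg_add_cancel_right, and_true]
  field_simp
  ring

/-- Eichler equivalence. -/
def eich (h2 : (2 : F) ≠ 0) (B : W →ₗ[F] W →ₗ[F] F) (w : W) : (F × F × W) ≃ₗ[F] (F × F × W) :=
  { eichLin B w with
    invFun := eichLin B (-w)
    left_inv := by
      intro u
      have := eich_neg h2 B (-w) u
      rw [neg_neg] at this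
      exact this
    right_inv := eich_neg h2 B w }

theorem eich_apply (h2 : (2 : F) ≠ 0) (B : W →ₗ[F] W →ₗ[F] F) (w : W) (u : F × F × W) :
  eich h2 B w u = (u.1 - B w u.2.2 - u.2.1 * (B w w / 2), u.2.1, u.2.2 + u.2.1 • w) := rfl

theorem eich_mem (h2 : (2 : F) ≠ 0) (B : W →ₗ[F] W →ₗ[F] F) (hs : ∀ x y, B x y = B y x) (w : W) :
    eich h2 B w ∈ isoGrp (hypForm B) := by
  rintro ⟨a, b, x⟩ ⟨a', b', x'⟩
  simp only [eich_apply, hypForm_apply, map_add, map_smul, LinearMap.add_apply,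
    LinearMap.smul_apply, smul_eq_mul, hs x w]
  field_simp
  ring

/-- Embedding of the isometry group of the complement. -/
def emb (h : W ≃ₗ[F] W) : (F × F × W) ≃ₗ[F] (F × F × W) :=
  (LinearEquiv.refl F F).prodCongr ((LinearEquiv.refl F F).prodCongr h)

@[simp] theorem emb_apply (h : W ≃ₗ[F] W) (u : F × F × W) :
    emb h u = (u.1, u.2.1, h u.2.2) := rfl

theorem emb_mem (B : W →ₗ[F] W →ₗ[F] F) (h : W ≃ₗ[F] W) (hh : h ∈ isoGrp B) :
    emb h ∈ isoGrp (hypForm B) := by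
  rintro ⟨a, b, x⟩ ⟨a', b', x'⟩
  simp [hh x x']

theorem stab_aux (B : W →ₗ[F] W →ₗ[F] F) (g : (F × F × W) ≃ₗ[F] (F × F × W))
    (hg : g ∈ isoGrp (hypForm B)) (h1 : g (1, 0, 0) = (1, 0, 0)) (h2 : g (0, 1, 0) = (0, 1, 0))
    (x : W) : g (0, 0, x) = (0, 0, (g (0, 0, x)).2.2) := by
  have a1 := hg (0, 0, x) (1, 0, 0)
  have a2 := hg (0, 0, x) (0, 1, 0)
  rw [h1] at a1
  rw [h2] at a2
  simp at a1 a2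
  ext <;> simp [a1, a2]

theorem stab_emb (B : W →ₗ[F] W →ₗ[F] F) (g : (F × F × W) ≃ₗ[F] (F × F × W))
    (hg : g ∈ isoGrp (hypForm B)) (h1 : g (1, 0, 0) = (1, 0, 0)) (h2 : g (0, 1, 0) = (0, 1, 0)) :
    ∃ h ∈ isoGrp B, emb h = g := by
  have hg' : g⁻¹ ∈ isoGrp (hypForm B) := inv_mem hg
  have i1 : g⁻¹ (1, 0, 0) = (1, 0, 0) := by
    conv_lhs => rw [← h1]
    rw [← LinearEquiv.mul_apply]; simp
  have i2 : g⁻¹ (0, 1, 0) = (0, 1, 0) := by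
    conv_lhs => rw [← h2]
    rw [← LinearEquiv.mul_apply]; simp
  let j : W →ₗ[F] F × F × W := LinearMap.inr F F (F × W) ∘ₗ LinearMap.inr F F W
  let p : F × F × W →ₗ[F] W := LinearMap.snd F F W ∘ₗ LinearMap.snd F F (F × W)
  have hj : ∀ x, j x = (0, 0, x) := fun x => rfl
  have hp : ∀ x, p x = x.2.2 := fun x => rfl
  have e1 := stab_aux B g hg h1 h2
  have e2 := stab_aux B g⁻¹ hg' i1 i2
  let h : W ≃ₗ[F] W := LinearEquiv.ofLinearMap (p ∘ₗ g.toLinearMap ∘ₗ j)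
    (p ∘ₗ (g⁻¹).toLinearMap ∘ₗ j) (by
      ext x
      simp only [LinearMap.comp_apply, hj, hp, LinearEquiv.coe_coe, LinearMap.id_apply]
      rw [← e2, ← LinearEquiv.mul_apply]; simp) (by
      ext x
      simp only [LinearMap.comp_apply, hj, hp, LinearEquiv.coe_coe, LinearMap.id_apply]
      rw [← e1, ← LinearEquiv.mul_apply]; simp)
  have hh : ∀ x, h x = (g (0, 0, x)).2.2 := fun x => rfl
  refine ⟨h, ?_, ?_⟩
  · intro x y
    have := hg (0, 0, x) (0, 0, y)
    rw [e1 x, e1 y] at this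
    simpa [hh] using this
  · ext1 u
    obtain ⟨a, b, x⟩ := u
    have : ((a, b, x) : F × F × W) = a • (1, 0, 0) + b • (0, 1, 0) + (0, 0, x) := by simp
    rw [emb_apply, this, map_add, map_add, map_smul, map_smul, h1, h2, e1]
    simp [hh]

theorem card_hyp (h2 : (2 : F) ≠ 0) (B : W →ₗ[F] W →ₗ[F] F) (hs : ∀ x y, B x y = B y x)
    (hn : ∀ x, x ≠ 0 → ∃ y, B x y ≠ 0) :
    Nat.card (isoGrp (hypForm B)) =
      Nat.card {u : F × F × W // u ≠ 0 ∧ hypForm B u u = 0} * (Nat.card W *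
        Nat.card (isoGrp B)) := by
  choose s hs1 hs2 using fun u : {u : F × F × W // u ≠ 0 ∧ hypForm B u u = 0} =>
    hyp_trans h2 B hs hn u.1 u.2.1 u.2.2
  rw [← Nat.card_prod, ← Nat.card_prod]
  symm
  let f : {u : F × F × W // u ≠ 0 ∧ hypForm B u u = 0} × W × isoGrp B → isoGrp (hypForm B) :=
    fun t => ⟨s t.1 * (eich h2 B t.2.1 * emb t.2.2.1),
      mul_mem (hs1 _) (mul_mem (eich_mem h2 B hs _) (emb_mem B _ t.2.2.2))⟩
  apply Nat.card_eq_of_bijective f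
  constructor
  · rintro ⟨u, w, h⟩ ⟨u', w', h'⟩ heq
    have heq := congrArg Subtype.val heq
    simp only [f] at heq
    have q1 : u = u' := by
      have := congrArg (fun g => g (1, 0, 0)) heq
      simp [LinearEquiv.mul_apply, eich_apply] at this
      rw [hs2, hs2] at this
      exact Subtype.ext this
    subst q1
    have heq := mul_left_cancel heq
    have q2 : w = w' := by
      have := congrArg (fun g => g (0, 1, 0)) heq
      simp [LinearEquiv.mul_apply, eich_apply] at this
      exact this.2
    subst q2
    have heq := mul_left_cancel heq
    have q3 : h = h' := by
      apply Subtype.ext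
      ext1 x
      have := congrArg (fun g => g (0, 0, x)) heq
      simpa using this
    rw [q3]
  · rintro ⟨g, hg⟩
    let u : {u : F × F × W // u ≠ 0 ∧ hypForm B u u = 0} := ⟨g (1, 0, 0), by
      constructor
      · rw [Ne, LinearEquiv.map_eq_zero_iff]; simp
      · rw [hg]; simp⟩
    let g1 := (s u)⁻¹ * g
    have hg1 : g1 ∈ isoGrp (hypForm B) := mul_mem (inv_mem (hs1 u)) hg
    have hg1e : g1 (1, 0, 0) = (1, 0, 0) := by
      have : g (1, 0, 0) = s u (1, 0, 0) := by rw [hs2]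
      simp only [g1]
      rw [LinearEquiv.mul_apply, this, ← LinearEquiv.mul_apply]; simp
    let w := (g1 (0, 1, 0)).2.2
    have hE : eich h2 B w (0, 1, 0) = g1 (0, 1, 0) := by
      have b1 := hg1 (1, 0, 0) (0, 1, 0)
      have b2 := hg1 (0, 1, 0) (0, 1, 0)
      rw [hg1e] at b1
      simp at b1 b2
      rw [b1] at b2
      rw [eich_apply]
      ext
      · simp only [map_zero, w]
        field_simp
        linear_combination -b2
      · simp [b1]
      · simp [w]
    have hEe : eich h2 B w (1, 0, 0) = (1, 0, 0) := by simp [eich_apply]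
    let g2 := (eich h2 B w)⁻¹ * g1
    have hg2 : g2 ∈ isoGrp (hypForm B) := mul_mem (inv_mem (eich_mem h2 B hs w)) hg1
    obtain ⟨h, hh, hhe⟩ := stab_emb B g2 hg2 (by
        simp only [g2]
        rw [LinearEquiv.mul_apply, hg1e]
        conv_lhs => rw [← hEe]
        rw [← LinearEquiv.mul_apply]; simp) (by
        simp only [g2]
        rw [LinearEquiv.mul_apply, ← hE]
        rw [← LinearEquiv.mul_apply]; simp)
    refine ⟨(u, w, ⟨h, hh⟩), ?_⟩
    apply Subtype.ext
    simp only [f, hhe, g2, g1]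
    group

theorem card_zeros_hyp [Finite F] [Finite W] (h2 : (2 : F) ≠ 0) (B : W →ₗ[F] W →ₗ[F] F) :
    Nat.card {u : F × F × W // hypForm B u u = 0} =
      (Nat.card F - 1) * Nat.card W + Nat.card F * Nat.card {x : W // B x x = 0} := by
  have e : {u : F × F × W // hypForm B u u = 0} ≃
      (({b : F // b ≠ 0} × W) ⊕ (F × {x : W // B x x = 0})) := by
    classical
    refine
    { toFun := fun u => if hb : u.1.2.1 = 0 then
          Sum.inr (u.1.1, ⟨u.1.2.2, by have := u.2; simpa [hb] using this⟩)
          else Sum.inl (⟨u.1.2.1, hb⟩, u.1.2.2)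
      invFun := Sum.elim
        (fun t => ⟨(-(B t.2 t.2) / (2 * t.1.1), t.1.1, t.2), by
          have := t.1.2
          simp only [hypForm_apply]; field_simp; ring⟩)
        (fun t => ⟨(t.1, 0, t.2.1), by simpa using t.2.2⟩)
      left_inv := ?_
      right_inv := ?_ }
    · rintro ⟨⟨a, b, x⟩, hu⟩
      by_cases hb : b = 0
      · subst hb; simp
      · simp only [hb, dite_false, Sum.elim_inl, Subtype.mk.injEq, Prod.mk.injEq, and_true]
        simp only [hypForm_apply] at hu
        field_simp
        linear_combination -hu
    · rintro (⟨⟨b, hb⟩, x⟩ | ⟨a, ⟨x, hx⟩⟩)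
      · simp [hb]
      · simp
  rw [Nat.card_congr e, Nat.card_sum, Nat.card_prod, Nat.card_prod]
  congr 2
  have := Fintype.ofFinite F
  classical
  rw [Nat.card_eq_fintype_card, Nat.card_eq_fintype_card]
  simp [Fintype.card_subtype_compl]

theorem card_zeros_ne {V : Type*} [AddCommGroup V] [Module F V] [Finite V]
    (B : V →ₗ[F] V →ₗ[F] F) :
    Nat.card {u : V // B u u = 0} = Nat.card {u : V // u ≠ 0 ∧ B u u = 0} + 1 := by
  have h0 : Nat.card {u : V // B u u = 0} = Set.ncard {u : V | B u u = 0} := rfl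
  have h1 : Nat.card {u : V // u ≠ 0 ∧ B u u = 0} = Set.ncard ({u : V | B u u = 0} \ {0}) := by
    show Set.ncard {u : V | u ≠ 0 ∧ B u u = 0} = _
    congr 1; ext u; simp [and_comm]
  rw [h0, h1, Set.ncard_sdiff_singleton_add_one (by simp)]

end hyp

section transfer
variable {F V V' : Type*} [Field F] [AddCommGroup V] [Module F V] [AddCommGroup V'] [Module F V']

theorem card_iso_congr (B : V →ₗ[F] V →ₗ[F] F) (B' : V' →ₗ[F] V' →ₗ[F] F) (φ : V ≃ₗ[F] V')
    (h : ∀ x y, B' (φ x) (φ y) = B x y) : Nat.card (isoGrp B) = Nat.card (isoGrp B') := by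
  have h' : ∀ x y, B (φ.symm x) (φ.symm y) = B' x y := by
    intro x y; rw [← h]; simp
  refine Nat.card_congr
    { toFun := fun g => ⟨(φ.symm.trans g.1).trans φ, ?_⟩
      invFun := fun g => ⟨(φ.trans g.1).trans φ.symm, ?_⟩
      left_inv := ?_
      right_inv := ?_ }
  · intro x y
    simp [h, g.2 _ _, h']
  · intro x y
    simp [h, g.2 _ _, h']
  · intro g; apply Subtype.ext; ext x; simp
  · intro g; apply Subtype.ext; ext x; simp

theorem card_zero_congr (B : V →ₗ[F] V →ₗ[F] F) (B' : V' →ₗ[F] V' →ₗ[F] F) (φ : V ≃ₗ[F] V')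
    (h : ∀ x y, B' (φ x) (φ y) = B x y) :
    Nat.card {x // B x x = 0} = Nat.card {x // B' x x = 0} := by
  refine Nat.card_congr (φ.toEquiv.subtypeEquiv ?_)
  intro x
  simp [h]

end transfer

/-- The anisotropic plane. -/
def planeForm {F : Type*} [Field F] (z : F) : (F × F) →ₗ[F] (F × F) →ₗ[F] F :=
  LinearMap.mk₂ F (fun u v => u.1 * v.1 - z * u.2 * v.2)
    (by intro a b c; simp; ring) (by intro a b c; simp; ring)
    (by intro a b c; simp; ring) (by intro a b c; simp; ring)

@[simp] theorem planeForm_apply {F : Type*} [Field F] (z : F) (u v : F × F) :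
    planeForm z u v = u.1 * v.1 - z * u.2 * v.2 := rfl

section plane
variable {F : Type*} [Field F]

theorem aniso (z : F) (hz : ¬ IsSquare z) (a b : F) (h : a * a - z * b * b = 0) :
    a = 0 ∧ b = 0 := by
  have hb : b = 0 := by
    by_contra hb
    apply hz
    refine ⟨a / b, ?_⟩
    field_simp
    linear_combination -h
  subst hb
  simpa using h

theorem card_conic [Finite F] (h2 : (2 : F) ≠ 0) (z : F) (hz : ¬ IsSquare z) :
    Nat.card {u : F × F // u.1 * u.1 - z * u.2 * u.2 = 1} = Nat.card F + 1 := by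
  have hd : ∀ t : F, 1 - z * t * t ≠ 0 := by
    intro t h
    have := (aniso z hz 1 t (by simpa using h)).1
    exact one_ne_zero this
  classical
  rw [← Finite.card_option]
  symm
  let f : Option F → {u : F × F // u.1 * u.1 - z * u.2 * u.2 = 1} := fun o =>
    match o with
    | none => ⟨(-1, 0), by simp⟩
    | some t => ⟨((1 + z * t * t) / (1 - z * t * t), 2 * t / (1 - z * t * t)), by
        have := hd t
        simp only
        generalize hD : 1 - z * t * t = D at this
        field_simp
        rw [← hD]; ring⟩
  have hne : ∀ t : F, (1 + z * t * t) / (1 - z * t * t) + 1 ≠ 0 := by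
    intro t h
    have := hd t
    rw [div_add_one this, div_eq_zero_iff] at h
    rcases h with h | h
    · apply h2; linear_combination h
    · exact this h
  apply Nat.card_eq_of_bijective f
  constructor
  · rintro (_ | t) (_ | t') h
    · rfl
    · exfalso
      have := congrArg (fun u => u.1.1) h
      simp only [f] at this
      exact hne t' (by rw [← this]; ring)
    · exfalso
      have := congrArg (fun u => u.1.1) h
      simp only [f] at this
      exact hne t (by rw [this]; ring)
    · have c1 := congrArg (fun u => u.1.1) h
      have c2 := congrArg (fun u => u.1.2) h
      simp only [f] at c1 c2
      have k : ∀ t : F, 2 * t / (1 - z * t * t) = t * ((1 + z * t * t) / (1 - z * t * t) + 1) := by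
        intro t
        rw [div_add_one (hd t), mul_div_assoc']
        congr 1; ring
      rw [k, k, ← c1] at c2
      rw [mul_right_cancel₀ (hne t) c2]
  · rintro ⟨⟨a, b⟩, h⟩
    simp only at h
    by_cases ha : a + 1 = 0
    · have ha : a = -1 := by linear_combination ha
      subst ha
      have hb := (aniso z hz 0 b (by linear_combination h)).2
      subst hb
      exact ⟨none, rfl⟩
    · refine ⟨some (b / (a + 1)), ?_⟩
      have hd' := hd (b / (a + 1))
      have e1 : 1 - z * (b / (a + 1)) * (b / (a + 1)) = 2 / (a + 1) := by
        field_simp; linear_combination h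
      apply Subtype.ext
      simp only [f]
      rw [e1]
      ext
      · simp only
        field_simp
        linear_combination -h
      · simp only
        field_simp

theorem card_sq_one (h2 : (2 : F) ≠ 0) : Nat.card {t : F // t * t = 1} = 2 := by
  have : {t : F | t * t = 1} = {1, -1} := by
    ext t; simp [mul_self_eq_one_iff]
  show Set.ncard {t : F | t * t = 1} = 2
  rw [this, Set.ncard_pair]
  intro h; apply h2; linear_combination h

/-- Isometry of the plane. -/
def planeLin (z a b t : F) : (F × F) →ₗ[F] (F × F) where
  toFun u := (a * u.1 + t * z * b * u.2, b * u.1 + t * a * u.2)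
  map_add' := by
    rintro ⟨x, y⟩ ⟨x', y'⟩
    simp only [Prod.mk_add_mk, Prod.mk.injEq]
    exact ⟨by ring, by ring⟩
  map_smul' := by
    rintro c ⟨x, y⟩
    simp only [Prod.smul_mk, smul_eq_mul, RingHom.id_apply, Prod.mk.injEq]
    exact ⟨by ring, by ring⟩

theorem planeLin_apply (z a b t : F) (u : F × F) :
    planeLin z a b t u = (a * u.1 + t * z * b * u.2, b * u.1 + t * a * u.2) := rfl

theorem planeLin_inj (z a b t : F) (h : a * a - z * b * b = 1)
    (ht : t * t = 1) : Function.Injective (planeLin z a b t) := by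
  rw [← LinearMap.ker_eq_bot, LinearMap.ker_eq_bot']
  rintro ⟨x, y⟩ hxy
  simp only [planeLin_apply, Prod.mk_eq_zero] at hxy
  obtain ⟨p, r⟩ := hxy
  have hy : t * y = 0 := by linear_combination a * r - b * p - t * y * h
  have hx : x = 0 := by linear_combination a * p - z * b * r - x * h
  have hy : y = 0 := by linear_combination t * hy - y * ht
  simp [hx, hy]

theorem card_plane [Finite F] (h2 : (2 : F) ≠ 0) (z : F) (hz : ¬ IsSquare z) :
    Nat.card (isoGrp (planeForm z)) = 2 * (Nat.card F + 1) := by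
  have hz0 : z ≠ 0 := by rintro rfl; exact hz (by simp)
  rw [← card_conic h2 z hz, ← card_sq_one h2, ← Nat.card_prod]
  symm
  let f : {t : F // t * t = 1} × {u : F × F // u.1 * u.1 - z * u.2 * u.2 = 1} →
      isoGrp (planeForm z) := fun p =>
    ⟨LinearEquiv.ofInjectiveEndo (planeLin z p.2.1.1 p.2.1.2 p.1.1)
      (planeLin_inj z _ _ _ p.2.2 p.1.2), by
      obtain ⟨⟨t, ht⟩, ⟨⟨a, b⟩, h⟩⟩ := p
      rintro ⟨x, y⟩ ⟨x', y'⟩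
      simp only [LinearEquiv.coe_ofInjectiveEndo, planeLin_apply, planeForm_apply]
      simp only at h
      linear_combination (x * x' - t * t * z * y * y') * h - z * y * y' * ht⟩
  have hf : ∀ p u, (f p).1 u = planeLin z p.2.1.1 p.2.1.2 p.1.1 u := fun p u => rfl
  apply Nat.card_eq_of_bijective f
  constructor
  · rintro ⟨⟨t, ht⟩, ⟨⟨a, b⟩, h⟩⟩ ⟨⟨t', ht'⟩, ⟨⟨a', b'⟩, h'⟩⟩ heq
    have c1 := congrArg (fun g => g.1 (1, 0)) heq
    have c2 := congrArg (fun g => g.1 (0, 1)) heq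
    simp [hf, planeLin_apply] at c1 c2
    obtain ⟨rfl, rfl⟩ := c1
    simp only at h
    have : t = t' := by
      linear_combination a * c2.2 - b * c2.1 - (t - t') * h
    subst this
    rfl
  · rintro ⟨g, hg⟩
    obtain ⟨⟨a, b⟩, hu⟩ : ∃ p, g (1, 0) = p := ⟨_, rfl⟩
    obtain ⟨⟨c, d⟩, hv⟩ : ∃ p, g (0, 1) = p := ⟨_, rfl⟩
    have r1 := hg (1, 0) (1, 0)
    have r2 := hg (1, 0) (0, 1)
    have r3 := hg (0, 1) (0, 1)
    rw [hu] at r1 r2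
    rw [hv] at r2 r3
    simp at r1 r2 r3
    have kc : (a * d - b * c) * z * b = c := by
      linear_combination (-a) * r2 + c * r1
    have kd : (a * d - b * c) * a = d := by
      linear_combination (-b) * r2 + d * r1
    have kt : (a * d - b * c) * (a * d - b * c) = 1 := by
      have : z * ((a * d - b * c) * (a * d - b * c) - 1) = 0 := by
        linear_combination r2 * (a * c - z * b * d) - r3 * (a * a - z * b * b) + z * r1
      rcases mul_eq_zero.1 this with h | h
      · exact absurd h hz0
      · linear_combination h
    refine ⟨(⟨a * d - b * c, kt⟩, ⟨(a, b), r1⟩), ?_⟩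
    apply Subtype.ext
    ext1 u
    obtain ⟨x, y⟩ := u
    rw [hf]
    have : ((x, y) : F × F) = x • (1, 0) + y • (0, 1) := by simp
    rw [this, map_add g, map_smul g, map_smul g, hu, hv, ← this]
    simp only [planeLin_apply, kc, kd]
    simp [mul_comm]

end plane

section mat
variable {F : Type*} [Field F]

/-- The bilinear form of a matrix. -/
def matForm {n : Type*} [Fintype n] [DecidableEq n] (S : Matrix n n F) :
    (n → F) →ₗ[F] (n → F) →ₗ[F] F := Matrix.toLinearMap₂' F S

theorem matForm_apply {n : Type*} [Fintype n] [DecidableEq n] (S : Matrix n n F) (x y : n → F) :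
    matForm S x y = x ⬝ᵥ S *ᵥ y := Matrix.toLinearMap₂'_apply' S x y

theorem matForm_inj {n : Type*} [Fintype n] [DecidableEq n] (S T : Matrix n n F) :
    matForm S = matForm T ↔ S = T :=
  (Matrix.toLinearMap₂' F (S₁ := F) (S₂ := F) (N₂ := F)).injective.eq_iff

theorem card_matrix {n : Type*} [Fintype n] [DecidableEq n] (S : Matrix n n F) :
    Nat.card {T : Matrix n n F // IsUnit T.det ∧ T * S * Tᵀ = S} =
      Nat.card (isoGrp (matForm S)) := by
  symm
  have key : ∀ T : Matrix n n F, (∀ x y, matForm S (Tᵀ *ᵥ x) (Tᵀ *ᵥ y) =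
      matForm S x y) ↔ T * S * Tᵀ = S := by
    intro T
    rw [← matForm_inj]
    have : ∀ x y, matForm (T * S * Tᵀ) x y =
        matForm S (Tᵀ *ᵥ x) (Tᵀ *ᵥ y) := by
      intro x y
      simp only [matForm_apply]
      rw [← Matrix.mulVec_mulVec, ← Matrix.mulVec_mulVec, Matrix.dotProduct_mulVec,
        ← Matrix.mulVec_transpose]
    constructor
    · intro h
      apply LinearMap.ext; intro x
      apply LinearMap.ext; intro y
      rw [this, h]
    · intro h x y
      rw [← this, h]
  let f : isoGrp (matForm S) → {T : Matrix n n F // IsUnit T.det ∧ T * S * Tᵀ = S} :=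
    fun g => ⟨(LinearMap.toMatrix' g.1.toLinearMap)ᵀ, by
      constructor
      · rw [Matrix.det_transpose, LinearMap.det_toMatrix']
        exact LinearEquiv.isUnit_det' g.1
      · rw [← key]
        intro x y
        rw [Matrix.transpose_transpose, LinearMap.toMatrix'_mulVec, LinearMap.toMatrix'_mulVec]
        exact g.2 x y⟩
  apply Nat.card_eq_of_bijective f
  constructor
  · intro g g' h
    have := congrArg Subtype.val h
    simp only [f] at this
    have := LinearMap.toMatrix'.injective (Matrix.transpose_injective this)
    exact Subtype.ext (LinearEquiv.toLinearMap_injective this)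
  · rintro ⟨T, hT, hTS⟩
    have hT' : IsUnit (Tᵀ).det := by rwa [Matrix.det_transpose]
    have hinj : Function.Injective (Matrix.toLin' Tᵀ) := by
      intro x y h
      simp only [Matrix.toLin'_apply] at h
      have := congrArg (fun v => (Tᵀ)⁻¹ *ᵥ v) h
      simpa [Matrix.mulVec_mulVec, Matrix.nonsing_inv_mul _ hT'] using this
    refine ⟨⟨LinearEquiv.ofInjectiveEndo (Matrix.toLin' Tᵀ) hinj, ?_⟩, ?_⟩
    · intro x y
      simp only [LinearEquiv.coe_ofInjectiveEndo, Matrix.toLin'_apply]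
      exact (key T).2 hTS x y
    · apply Subtype.ext
      simp only [f]
      have : (LinearEquiv.ofInjectiveEndo (Matrix.toLin' Tᵀ) hinj).toLinearMap = Matrix.toLin' Tᵀ := by
        ext1 x; rfl
      rw [this]; simp

theorem gramS_form_apply (ν : ℕ) (z : F) (x y : Fin ν ⊕ (Fin ν ⊕ Fin 2) → F) :
    matForm (gramS F ν z) x y =
      ∑ i, x (.inl i) * y (.inr (.inl i)) + ∑ i, x (.inr (.inl i)) * y (.inl i) +
      (x (.inr (.inr 0)) * y (.inr (.inr 0)) - z * x (.inr (.inr 1)) * y (.inr (.inr 1))) := by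
  rw [matForm_apply]
  simp only [dotProduct, Matrix.mulVec, Fintype.sum_sum_type, Fin.sum_univ_two]
  simp [gramS]
  ring

/-- Splitting off the hyperbolic plane. -/
def splitEquiv (ν : ℕ) : (F × F × (Fin ν ⊕ (Fin ν ⊕ Fin 2) → F)) ≃ₗ[F]
    (Fin (ν + 1) ⊕ (Fin (ν + 1) ⊕ Fin 2) → F) where
  toFun u := Sum.elim (Fin.cons u.1 (fun i => u.2.2 (.inl i)))
    (Sum.elim (Fin.cons u.2.1 (fun i => u.2.2 (.inr (.inl i)))) (fun i => u.2.2 (.inr (.inr i))))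
  invFun x := (x (.inl 0), x (.inr (.inl 0)), Sum.elim (fun i => x (.inl i.succ))
    (Sum.elim (fun i => x (.inr (.inl i.succ))) (fun i => x (.inr (.inr i)))))
  map_add' := by
    intro u v
    ext (i | i | i)
    · refine Fin.cases ?_ (fun i => ?_) i <;> simp
    · refine Fin.cases ?_ (fun i => ?_) i <;> simp
    · simp
  map_smul' := by
    intro c u
    ext (i | i | i)
    · refine Fin.cases ?_ (fun i => ?_) i <;> simp
    · refine Fin.cases ?_ (fun i => ?_) i <;> simp
    · simp
  left_inv := by
    rintro ⟨a, b, x⟩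
    simp only [Sum.elim_inl, Sum.elim_inr, Fin.cons_zero, Fin.cons_succ, Prod.mk.injEq, true_and]
    ext (i | i | i) <;> simp
  right_inv := by
    intro x
    ext (i | i | i)
    · refine Fin.cases ?_ (fun i => ?_) i <;> simp
    · refine Fin.cases ?_ (fun i => ?_) i <;> simp
    · simp

theorem split_iso (ν : ℕ) (z : F) (u v : F × F × (Fin ν ⊕ (Fin ν ⊕ Fin 2) → F)) :
    matForm (gramS F (ν + 1) z) (splitEquiv ν u) (splitEquiv ν v) =
      hypForm (matForm (gramS F ν z)) u v := by
  rw [gramS_form_apply, hypForm_apply, gramS_form_apply]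
  simp only [splitEquiv, LinearEquiv.coe_mk, LinearMap.coe_mk, AddHom.coe_mk, Fin.sum_univ_succ,
    Sum.elim_inl, Sum.elim_inr, Fin.cons_zero, Fin.cons_succ]
  ring

/-- The base case as a plane. -/
def baseEquiv : (F × F) ≃ₗ[F] (Fin 0 ⊕ (Fin 0 ⊕ Fin 2) → F) where
  toFun u := Sum.elim (fun _ => 0) (Sum.elim (fun _ => 0) ![u.1, u.2])
  invFun x := (x (.inr (.inr 0)), x (.inr (.inr 1)))
  map_add' := by
    intro u v
    ext (i | i | i)
    · exact i.elim0
    · exact i.elim0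
    · fin_cases i <;> simp
  map_smul' := by
    intro u v
    ext (i | i | i)
    · exact i.elim0
    · exact i.elim0
    · fin_cases i <;> simp
  left_inv := by
    rintro ⟨a, b⟩
    simp
  right_inv := by
    intro x
    ext (i | i | i)
    · exact i.elim0
    · exact i.elim0
    · fin_cases i <;> simp

theorem base_iso (z : F) (u v : F × F) :
    matForm (gramS F 0 z) (baseEquiv u) (baseEquiv v) = planeForm z u v := by
  rw [gramS_form_apply, planeForm_apply]
  simp [baseEquiv]

theorem gram_symm (ν : ℕ) (z : F) (x y : Fin ν ⊕ (Fin ν ⊕ Fin 2) → F) :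
    matForm (gramS F ν z) x y = matForm (gramS F ν z) y x := by
  rw [gramS_form_apply, gramS_form_apply, add_comm (∑ i, x (.inl i) * _)]
  congr 1
  · simp only [mul_comm]
  · ring

theorem gram_nondeg (z : F) (hz : z ≠ 0) (ν : ℕ) : ∀ x : Fin ν ⊕ (Fin ν ⊕ Fin 2) → F, x ≠ 0 →
    ∃ y, matForm (gramS F ν z) x y ≠ 0 := by
  induction ν with
  | zero =>
    intro x hx
    obtain ⟨⟨a, b⟩, rfl⟩ := baseEquiv.surjective x
    have h0 : (a, b) ≠ 0 := by rintro h; rw [h] at hx; simp at hx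
    by_cases ha : a = 0
    · have hb : b ≠ 0 := by rintro rfl; simp [ha] at h0
      exact ⟨baseEquiv (0, 1), by rw [base_iso]; simp [hb, hz]⟩
    · exact ⟨baseEquiv (1, 0), by rw [base_iso]; simp [ha]⟩
  | succ ν ih =>
    intro x hx
    obtain ⟨u, rfl⟩ := (splitEquiv ν).surjective x
    have h0 : u ≠ 0 := by rintro h; rw [h] at hx; simp at hx
    obtain ⟨y, hy⟩ := hyp_nondeg _ ih u h0
    exact ⟨splitEquiv ν y, by rwa [split_iso]⟩

theorem gram_zeros [Finite F] (h2 : (2 : F) ≠ 0) (z : F) (hz : ¬ IsSquare z) (ν : ℕ) :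
    Nat.card {x // matForm (gramS F ν z) x x = 0} =
      (Nat.card F ^ (ν + 1) + 1) * (Nat.card F ^ ν - 1) + 1 := by
  induction ν with
  | zero =>
    rw [← card_zero_congr _ _ baseEquiv (base_iso z)]
    simp only [pow_zero, Nat.sub_self, mul_zero, zero_add]
    rw [Nat.card_eq_one_iff_unique]
    constructor
    · constructor
      rintro ⟨⟨a, b⟩, h⟩ ⟨⟨a', b'⟩, h'⟩
      obtain ⟨rfl, rfl⟩ := aniso z hz a b h
      obtain ⟨rfl, rfl⟩ := aniso z hz a' b' h'
      rfl
    · exact ⟨⟨0, by simp⟩⟩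
  | succ ν ih =>
    rw [← card_zero_congr _ _ (splitEquiv ν) (split_iso ν z), card_zeros_hyp h2, ih]
    have hW : Nat.card (Fin ν ⊕ (Fin ν ⊕ Fin 2) → F) = Nat.card F ^ (2 * ν + 2) := by
      rw [Nat.card_fun]; congr 1; simp; ring
    rw [hW]
    have hq : 1 ≤ Nat.card F := Nat.card_pos
    generalize Nat.card F = q at hq
    have h1 : 1 ≤ q ^ ν := Nat.one_le_pow _ _ hq
    have h2 : 1 ≤ q ^ (ν + 1) := Nat.one_le_pow _ _ hq
    zify [hq, h1, h2]
    ring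

theorem card_gram [Finite F] (h2 : (2 : F) ≠ 0) (z : F) (hz : ¬ IsSquare z) (ν : ℕ) :
    Nat.card (isoGrp (matForm (gramS F ν z))) =
      Nat.card F ^ (ν * (ν + 1)) * (∏ i ∈ Finset.Icc 1 ν, (Nat.card F ^ i - 1)) *
          ∏ i ∈ Finset.Icc 0 (ν + 1), (Nat.card F ^ i + 1) := by
  have hz0 : z ≠ 0 := by rintro rfl; exact hz (by simp)
  induction ν with
  | zero =>
    rw [← card_iso_congr _ _ baseEquiv (base_iso z), card_plane h2 z hz]
    simp [Finset.prod_Icc_succ_top]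
  | succ ν ih =>
    have hI := gram_zeros h2 z hz (ν + 1)
    rw [← card_zero_congr _ _ (splitEquiv ν) (split_iso ν z), card_zeros_ne] at hI
    have hI := Nat.add_right_cancel hI
    rw [← card_iso_congr _ _ (splitEquiv ν) (split_iso ν z),
      card_hyp h2 _ (gram_symm ν z) (gram_nondeg z hz0 ν), ih, hI]
    have hW : Nat.card (Fin ν ⊕ (Fin ν ⊕ Fin 2) → F) = Nat.card F ^ (2 * ν + 2) := by
      rw [Nat.card_fun]; congr 1; simp; ring
    rw [hW, Finset.prod_Icc_succ_top (by omega : 1 ≤ ν + 1),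
      Finset.prod_Icc_succ_top (by omega : 0 ≤ ν + 1 + 1)]
    ring

end mat

theorem stmt_18 (F : Type*) [Field F] [Fintype F] (q : ℕ)
    (hq : Fintype.card F = q) (hodd : Odd q) (z : F) (hz : ¬ IsSquare z)
    (hz1 : ¬ IsSquare (1 - z)) (ν : ℕ) :
    Nat.card {T : Matrix (Fin ν ⊕ (Fin ν ⊕ Fin 2)) (Fin ν ⊕ (Fin ν ⊕ Fin 2)) F //
        IsUnit T.det ∧ T * gramS F ν z * Tᵀ = gramS F ν z}
      = q ^ (ν * (ν + 1)) * (∏ i ∈ Finset.Icc 1 ν, (q ^ i - 1)) *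
          ∏ i ∈ Finset.Icc 0 (ν + 1), (q ^ i + 1) := by
  have h2 : (2 : F) ≠ 0 := by
    apply Ring.two_ne_zero
    intro h
    have := FiniteField.even_card_of_char_two h
    rw [hq] at this
    rw [Nat.odd_iff] at hodd
    omega
  rw [card_matrix, card_gram h2 z hz, Nat.card_eq_fintype_card, hq]
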